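/- arXiv:1911.02229 — 2 statements merged into one kernel-verified Lean document; each statement's English description precedes it below -/
import Mathlib

section
/- Let G be a group, let g ≥ 1 be an integer, let γ₁, …, γ_{2g} and δ₁, …, δ_{2g} be elements of G, and let B₁, …, B_{2g} be automorphisms of G such that (a) B_i(δ_i) = γ_i for all 1 ≤ i ≤ 2g, (b) B_i(γ_i) = δ_{i+1} for all 1 ≤ i ≤ 2g−1, (c) B_{2g}(γ_{2g}) = δ₁⁻¹, and (d) B_j(γ_i) = γ_i whenever i ≠ j. Let W be the composite automorphism B₁ ∘ B_{2g} ∘ B_{2g−1} ∘ ⋯ ∘ B₂ ∘ B₁, where the rightmost B₁ is applied first, then B₂, B₃, …, B_{2g}, and finally B₁. Then W(γ_i) = γ_{i+1} for every 1 ≤ i ≤ 2g−1, and W(γ_{2g}) = γ₁⁻¹. -/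
/-!
Follow `γ i` through the factors of `W`. Every factor before `B i` fixes it, `B i` moves it to
`δ (i + 1)`, and the very next factor `B (i + 1)` moves that on to `γ (i + 1)`, which all the
remaining factors fix. The element `γ (2g)` is instead sent by `B (2g)` to `(δ 1)⁻¹`, when the
list of factors is exhausted except for the extra `B 1` on the left, which closes the cycle by
sending `(δ 1)⁻¹` to `(γ 1)⁻¹`.
-/

section DescendingProduct

variable {M X : Type*} [Monoid M]

/-- The descending product `B n * B (n - 1) * ⋯ * B 1`, so that `B 1` acts first. The factors are
indexed from `1`; the value `B 0` does not occur. -/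
def descProd (B : ℕ → M) (n : ℕ) : M :=
  ((List.range n).map fun k => B (n - k)).prod

theorem descProd_zero (B : ℕ → M) : descProd B 0 = 1 := rfl

theorem descProd_succ (B : ℕ → M) (n : ℕ) :
    descProd B (n + 1) = B (n + 1) * descProd B n := by
  simp only [descProd, List.range_succ_eq_map, List.map_cons, List.map_map, List.prod_cons,
    Function.comp_def, Nat.succ_eq_add_one, Nat.add_sub_add_right, Nat.sub_zero]

variable [MulAction M X] {B : ℕ → M} {i m n : ℕ} {x y z : X}

theorem descProd_smul_eq_of_le (hmn : m ≤ n) (hxy : descProd B m • x = y)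
    (hy : ∀ j, m < j → j ≤ n → B j • y = y) : descProd B n • x = y := by
  induction n, hmn using Nat.le_induction with
  | base => exact hxy
  | succ n hmn ih =>
    rw [descProd_succ, mul_smul, ih fun j hmj hjn => hy j hmj (by lia)]
    exact hy (n + 1) (by lia) le_rfl

theorem descProd_smul_eq_self (hx : ∀ j, 1 ≤ j → j ≤ n → B j • x = x) :
    descProd B n • x = x :=
  descProd_smul_eq_of_le n.zero_le (by rw [descProd_zero, one_smul]) hx

theorem descProd_smul_eq_smul (hn : 1 ≤ n) (hx : ∀ j, 1 ≤ j → j < n → B j • x = x) :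
    descProd B n • x = B n • x := by
  obtain ⟨k, rfl⟩ := Nat.exists_eq_add_of_le' hn
  rw [descProd_succ, mul_smul,
    descProd_smul_eq_self fun j hj hjk => hx j hj (Nat.lt_succ_of_le hjk)]

theorem descProd_smul_eq_of_two_moves (hi : 1 ≤ i) (hin : i < n)
    (hx : ∀ j, 1 ≤ j → j < i → B j • x = x) (hxy : B i • x = y) (hyz : B (i + 1) • y = z)
    (hz : ∀ j, i + 1 < j → j ≤ n → B j • z = z) : descProd B n • x = z := by
  have h_succ : descProd B (i + 1) • x = z := by
    rw [descProd_succ, mul_smul, descProd_smul_eq_smul hi hx, hxy, hyz]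
  exact descProd_smul_eq_of_le hin h_succ hz

end DescendingProduct

theorem stmt1_general {M G : Type*} [Monoid M] [Group G] [MulDistribMulAction M G]
    {n : ℕ} (hn : 1 ≤ n) {γ δ : ℕ → G} {B : ℕ → M}
    (ha : ∀ i, 1 ≤ i → i ≤ n → B i • δ i = γ i)
    (hb : ∀ i, 1 ≤ i → i ≤ n - 1 → B i • γ i = δ (i + 1))
    (hc : B n • γ n = (δ 1)⁻¹)
    (hd : ∀ i j, 1 ≤ i → i ≤ n → 1 ≤ j → j ≤ n → i ≠ j → B j • γ i = γ i) :
    (∀ i, 1 ≤ i → i ≤ n - 1 → (B 1 * descProd B n) • γ i = γ (i + 1)) ∧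
      (B 1 * descProd B n) • γ n = (γ 1)⁻¹ := by
  constructor
  · intro i hi hin
    have h_desc : descProd B n • γ i = γ (i + 1) :=
      descProd_smul_eq_of_two_moves hi (by lia)
        (fun j hj hji => hd i j hi (by lia) hj (by lia) hji.ne')
        (hb i hi hin) (ha (i + 1) (by lia) (by lia))
        (fun j hij hjn => hd (i + 1) j (by lia) (by lia) (by lia) hjn hij.ne)
    rw [mul_smul, h_desc]
    exact hd (i + 1) 1 (by lia) (by lia) le_rfl hn (by lia)
  · have h_desc : descProd B n • γ n = (δ 1)⁻¹ :=
      (descProd_smul_eq_smul hn fun j hj hjn => hd n j hn le_rfl hj hjn.le hjn.ne').trans hc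
    rw [mul_smul, h_desc, smul_inv', ha 1 le_rfl hn]

/-- The algebraic core of Proposition 3.2: if automorphisms `B 1, …, B (2g)` of a group `G`
act on elements `γ i`, `δ i` by `B i (δ i) = γ i`, `B i (γ i) = δ (i+1)` for `i ≤ 2g - 1`,
`B (2g) (γ (2g)) = (δ 1)⁻¹`, and `B j (γ i) = γ i` for `i ≠ j`, then the composite
`W = B 1 ∘ B (2g) ∘ B (2g-1) ∘ ⋯ ∘ B 2 ∘ B 1` (rightmost applied first) satisfies
`W (γ i) = γ (i+1)` for `1 ≤ i ≤ 2g - 1` and `W (γ (2g)) = (γ 1)⁻¹`. -/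
theorem stmt1 (G : Type*) [Group G] (g : ℕ) (hg : 1 ≤ g)
    (γ δ : ℕ → G) (B : ℕ → G ≃* G)
    (ha : ∀ i, 1 ≤ i → i ≤ 2 * g → B i (δ i) = γ i)
    (hb : ∀ i, 1 ≤ i → i ≤ 2 * g - 1 → B i (γ i) = δ (i + 1))
    (hc : B (2 * g) (γ (2 * g)) = (δ 1)⁻¹)
    (hd : ∀ i j, 1 ≤ i → i ≤ 2 * g → 1 ≤ j → j ≤ 2 * g → i ≠ j → B j (γ i) = γ i) :
    (∀ i, 1 ≤ i → i ≤ 2 * g - 1 →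
      ((B 1 :: (List.range (2 * g)).map (fun k => B (2 * g - k))).prod : G ≃* G) (γ i)
        = γ (i + 1)) ∧
    ((B 1 :: (List.range (2 * g)).map (fun k => B (2 * g - k))).prod : G ≃* G) (γ (2 * g))
      = (γ 1)⁻¹ :=
  stmt1_general (M := MulAut G) (by lia) ha hb hc hd
end

section
/- Let G be a group, let g ≥ 1 be an integer, let ε₁, …, ε_{2g+2} be elements of G, and let D₁, …, D_{2g+1} be automorphisms of G such that (a) D_i(ε_{i+1}) = ε_{i+1}·ε_i⁻¹ for all 1 ≤ i ≤ 2g+1, (b) D_{i+1}(ε_i) = ε_{i+1}·ε_i for all 1 ≤ i ≤ 2g, and (c) D_j(ε_i) = ε_i for all indices 1 ≤ i ≤ 2g+2 and 1 ≤ j ≤ 2g+1 with |i − j| ≠ 1. Then the composite automorphism D₁ ∘ D₂ ∘ ⋯ ∘ D_{2g+1} (where D_{2g+1} is applied first) satisfies (D₁ ∘ D₂ ∘ ⋯ ∘ D_{2g+1})(ε_i) = ε_{i+1} for every 1 ≤ i ≤ 2g. -/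
/-!
Follow `ε i` through the composite, starting from the right: every factor `D j` with `j ≥ i + 2`
fixes `ε i`, the pair `D i ∘ D (i + 1)` sends `ε i` to `ε (i + 1)`, and every factor `D j` with
`j < i` fixes `ε (i + 1)`.
-/

section MulAction

variable {M α : Type*} [Monoid M] [MulAction M α]

theorem list_prod_smul_eq_self {l : List M} {x : α} (h : ∀ d ∈ l, d • x = x) :
    l.prod • x = x :=
  (MulAction.stabilizerSubmonoid M x).list_prod_mem h

theorem prod_map_range_smul_eq_of_fixed {f : ℕ → M} {x y : α} {k n : ℕ} (hkn : k + 2 ≤ n)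
    (hy : ∀ j < k, f j • y = y) (hxy : f k • f (k + 1) • x = y)
    (hx : ∀ j, k + 2 ≤ j → j < n → f j • x = x) :
    ((List.range n).map f).prod • x = y := by
  obtain ⟨m, rfl⟩ := Nat.exists_eq_add_of_le hkn
  have prod_split : ((List.range (k + 2 + m)).map f).prod =
      ((List.range k).map f).prod * f k * f (k + 1) *
        ((List.range m).map fun j ↦ f (k + 2 + j)).prod := by
    rw [List.range_add, List.map_append, List.prod_append, List.prod_range_succ,
      List.prod_range_succ, List.map_map, Function.comp_def]
  have upper_fixes : ((List.range m).map fun j ↦ f (k + 2 + j)).prod • x = x :=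
    list_prod_smul_eq_self <| List.forall_mem_map.2 fun j hj ↦
      hx _ (Nat.le_add_right _ _) (Nat.add_lt_add_left (List.mem_range.1 hj) _)
  have lower_fixes : ((List.range k).map f).prod • y = y :=
    list_prod_smul_eq_self <| List.forall_mem_map.2 fun j hj ↦ hy j (List.mem_range.1 hj)
  rw [prod_split, mul_smul, upper_fixes, mul_smul, mul_smul, hxy, lower_fixes]

end MulAction

section MulDistribMulAction

variable {M G : Type*} [Monoid M] [Group G] [MulDistribMulAction M G]

theorem smul_smul_eq_of_smul_eq_mul {s t : M} {a b : G} (hsa : s • a = a)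
    (hsb : s • b = b * a⁻¹) (hta : t • a = b * a) : s • t • a = b := by
  rw [hta, smul_mul', hsb, hsa, inv_mul_cancel_right]

theorem stmt2_general (n : ℕ) (ε : ℕ → G) (D : ℕ → M)
    (ha : ∀ i, 1 ≤ i → i ≤ n → D i • ε (i + 1) = ε (i + 1) * (ε i)⁻¹)
    (hb : ∀ i, 1 ≤ i → i ≤ n → D (i + 1) • ε i = ε (i + 1) * ε i)
    (hc : ∀ i j, 1 ≤ i → i ≤ n + 1 → 1 ≤ j → j ≤ n + 1 →
      |(i : ℤ) - (j : ℤ)| ≠ 1 → D j • ε i = ε i) :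
    ∀ i, 1 ≤ i → i ≤ n →
      ((List.range (n + 1)).map fun k ↦ D (k + 1)).prod • ε i = ε (i + 1) := by
  intro i hi hin
  obtain ⟨k, rfl⟩ := Nat.exists_eq_add_of_le' hi
  have lower_fixes (j : ℕ) (hj : j < k) : D (j + 1) • ε (k + 2) = ε (k + 2) :=
    hc (k + 2) (j + 1) (by lia) (by lia) (by lia) (by lia) (by grind)
  have pair_shifts : D (k + 1) • D (k + 2) • ε (k + 1) = ε (k + 2) :=
    smul_smul_eq_of_smul_eq_mul
      (hc (k + 1) (k + 1) hi (by lia) hi (by lia) (by simp)) (ha (k + 1) hi hin) (hb (k + 1) hi hin)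
  have upper_fixes (j : ℕ) (hkj : k + 2 ≤ j) (hjn : j < n + 1) :
      D (j + 1) • ε (k + 1) = ε (k + 1) :=
    hc (k + 1) (j + 1) hi (by lia) (by lia) hjn (by grind)
  exact prod_map_range_smul_eq_of_fixed (by lia) lower_fixes pair_shifts upper_fixes

end MulDistribMulAction

/-- The algebraic core of Proposition 3.3: if automorphisms `D 1, …, D (2g+1)` of a group `G`
act on elements `ε 1, …, ε (2g+2)` by `D i (ε (i+1)) = ε (i+1) * (ε i)⁻¹`,
`D (i+1) (ε i) = ε (i+1) * ε i`, and `D j (ε i) = ε i` whenever `|i - j| ≠ 1`, then the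
composite `D 1 ∘ D 2 ∘ ⋯ ∘ D (2g+1)` (with `D (2g+1)` applied first) sends `ε i` to
`ε (i+1)` for every `1 ≤ i ≤ 2g`. -/
theorem stmt2 (G : Type*) [Group G] (g : ℕ) (hg : 1 ≤ g)
    (ε : ℕ → G) (D : ℕ → G ≃* G)
    (ha : ∀ i, 1 ≤ i → i ≤ 2 * g + 1 → D i (ε (i + 1)) = ε (i + 1) * (ε i)⁻¹)
    (hb : ∀ i, 1 ≤ i → i ≤ 2 * g → D (i + 1) (ε i) = ε (i + 1) * ε i)
    (hc : ∀ i j, 1 ≤ i → i ≤ 2 * g + 2 → 1 ≤ j → j ≤ 2 * g + 1 →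
      |(i : ℤ) - (j : ℤ)| ≠ 1 → D j (ε i) = ε i) :
    ∀ i, 1 ≤ i → i ≤ 2 * g →
      (((List.range (2 * g + 1)).map (fun k => D (k + 1))).prod : G ≃* G) (ε i)
        = ε (i + 1) := by
  exact stmt2_general (M := MulAut G) (2 * g) ε D (fun i hi hin ↦ ha i hi (by lia)) hb
    (fun i j hi hin ↦ hc i j hi (by lia))
end
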